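/- arXiv:1506.08071 — 3 statements merged into one kernel-verified Lean document; each statement's English description precedes it below -/
import Mathlib

section
/- Under the action of SL_*^1(2,A_n) on column vectors M_{2×1}(A_n) by left multiplication, the orbit of (1,0)^T equals O₁ ∪ O₂, where O₁ = {(a, ua)^T : a ∈ A_n^×, u ∈ A_n^asym} and O₂ = {(uc, c)^T : c ∈ A_n^×, u ∈ A_n^asym and u not a unit}; in particular this orbit has cardinality (q²−1)·q^{3n−3}·(q+1). -/
open Polynomial Matrix

noncomputable section

abbrev TruncPoly (K : Type) [CommRing K] (n : ℕ) := AdjoinRoot (X ^ n : K[X])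

def trStar (K : Type) [CommRing K] (σ : K →+* K) (n : ℕ) :
    TruncPoly K n →+* TruncPoly K n :=
  AdjoinRoot.lift ((AdjoinRoot.of _).comp σ) (-(AdjoinRoot.root _)) (by
    have h : (AdjoinRoot.root (X ^ n : K[X])) ^ n = 0 := by
      rw [← AdjoinRoot.mk_X, ← map_pow, AdjoinRoot.mk_self]
    rw [eval₂_pow, eval₂_X, neg_pow, h, mul_zero])

/-- The matrix `J = [[0,1],[1,0]]`. -/
def jMat (A : Type) [CommRing A] : Matrix (Fin 2) (Fin 2) A := !![0, 1; 1, 0]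

/-- The involution `g ↦ g*` on 2×2 matrices: `(g*)_{ij} = (g_{ji})*`. -/
def mStar (A : Type) [CommRing A] (st : A →+* A) (g : Matrix (Fin 2) (Fin 2) A) :
    Matrix (Fin 2) (Fin 2) A := (g.map st)ᵀ

/-- The group `SL_*^1(2,A)` (as a set of matrices): `g* J g = J`. -/
def SLstarSet (A : Type) [CommRing A] (st : A →+* A) : Set (Matrix (Fin 2) (Fin 2) A) :=
  {g | mStar A st g * jMat A * g = jMat A}

/-!
A vector `(a, c)` is a first column of some `g` with `g* J g = J` exactly when it is unimodular and
isotropic, `c* a + a* c = 0`. Over a local ring one of `a`, `c` is a unit; if it is `a`, isotropy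
says that `c a⁻¹` is skew, and symmetrically for `c`. This gives `O₁ ∪ O₂`, parametrized by the
units times the skew elements, respectively the units times the skew nonunits.

For the count, any `θ ∈ K` moved by the involution gives `A = S ⊕ θ S` with `S = A^asym`, so that
`|S|² = |A|` in every characteristic. The constant coefficient `A_n → K` is a local homomorphism
that maps skew elements onto skew elements, so the (skew) nonunits are its (skew) kernel.
-/

open Function

section Skew

variable {A : Type*} [CommRing A]

/-- The additive group `A^asym = {a | a* = -a}` of an involution `s`. -/
def skewElements (s : A →+* A) : AddSubgroup A :=
  s.toAddMonoidHom.eqLocus (-AddMonoidHom.id A)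

theorem mem_skewElements {s : A →+* A} {u : A} : u ∈ skewElements s ↔ s u = -u :=
  Iff.rfl

theorem bijective_skew_add_mul_skew {s : A →+* A} (hs : Involutive s) {θ : A}
    (hθ : IsUnit (θ - s θ)) :
    Bijective fun x : skewElements s × skewElements s ↦ (x.1 + θ * x.2 : A) := by
  obtain ⟨e, he⟩ := hθ.exists_left_inv
  have hse : s e = -e := by
    have h := congrArg s he
    rw [map_mul, map_sub, hs, map_one] at h
    linear_combination (-e) * h - s e * he
  constructor
  · rintro ⟨⟨u, hu⟩, ⟨v, hv⟩⟩ ⟨⟨u', hu'⟩, ⟨v', hv'⟩⟩ h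
    rw [mem_skewElements] at hu hv hu' hv'
    have h_star := congrArg s h
    simp only [map_add, map_mul, hu, hv, hu', hv'] at h h_star
    have hvv' : v = v' := by linear_combination e * (h + h_star) - (v - v') * he
    subst hvv'
    simpa using h
  · -- the second coordinate is found by applying `1 + s`, which kills the first
    intro a
    have hv : e * (a + s a) ∈ skewElements s := by
      rw [mem_skewElements, map_mul, map_add, hs, hse]
      ring
    have hu : a - θ * (e * (a + s a)) ∈ skewElements s := by
      rw [mem_skewElements] at hv ⊢
      rw [map_sub, map_mul, hv]
      linear_combination (-(a + s a)) * he
    exact ⟨⟨⟨_, hu⟩, ⟨_, hv⟩⟩, sub_add_cancel _ _⟩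

theorem card_skewElements_sq {s : A →+* A} (hs : Involutive s) {θ : A}
    (hθ : IsUnit (θ - s θ)) : Nat.card (skewElements s) ^ 2 = Nat.card A := by
  rw [sq, ← Nat.card_prod]
  exact Nat.card_eq_of_bijective _ (bijective_skew_add_mul_skew hs hθ)

theorem exists_isUnit_sub_of_ne_id {F : Type*} [Field F] {σ : F →+* F}
    (hσ : σ ≠ RingHom.id F) : ∃ θ, IsUnit (θ - σ θ) := by
  obtain ⟨θ, hθ⟩ := DFunLike.ne_iff.1 hσ
  exact ⟨θ, (sub_ne_zero.2 hθ.symm).isUnit⟩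

end Skew

section FirstColumn

variable {A : Type} [CommRing A] (s : A →+* A)

/-- The orbit of `(1,0)ᵀ` under `SL_*^1(2,A)`, as a set of vectors. -/
def baseOrbit : Set (Fin 2 → A) :=
  {v | ∃ g ∈ SLstarSet A s, v = g.mulVec ![1, 0]}

/-- The set `O₁` of vectors `(a, ua)ᵀ` with `a` a unit and `u` skew. -/
def unitFirstColumns : Set (Fin 2 → A) :=
  {v | ∃ a u : A, IsUnit a ∧ s u = -u ∧ v = ![a, u * a]}

/-- The set `O₂` of vectors `(uc, c)ᵀ` with `c` a unit and `u` a skew nonunit. -/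
def nonunitFirstColumns : Set (Fin 2 → A) :=
  {v | ∃ c u : A, IsUnit c ∧ s u = -u ∧ ¬ IsUnit u ∧ v = ![u * c, c]}

variable {s}

theorem mem_SLstarSet_iff {a b c d : A} :
    !![a, b; c, d] ∈ SLstarSet A s ↔
      (s c * a + s a * c = 0 ∧ s c * b + s a * d = 1) ∧
        (s d * a + s b * c = 1 ∧ s d * b + s b * d = 0) := by
  change mStar A s !![a, b; c, d] * jMat A * !![a, b; c, d] = jMat A ↔ _
  rw [← Matrix.ext_iff]
  simp [mStar, jMat, Fin.forall_fin_two, Matrix.mul_apply, Fin.sum_univ_two]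

theorem mulVec_one_zero (g : Matrix (Fin 2) (Fin 2) A) : g.mulVec ![1, 0] = ![g 0 0, g 1 0] := by
  ext i
  fin_cases i <;> simp [Matrix.mulVec, dotProduct]

theorem mem_baseOrbit_iff_exists {a c : A} :
    ![a, c] ∈ baseOrbit s ↔ ∃ b d, !![a, b; c, d] ∈ SLstarSet A s := by
  constructor
  · rintro ⟨g, hg, hv⟩
    rw [mulVec_one_zero] at hv
    obtain rfl : a = g 0 0 := congrFun hv 0
    obtain rfl : c = g 1 0 := congrFun hv 1
    exact ⟨g 0 1, g 1 1, by rwa [← Matrix.eta_fin_two g]⟩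
  · rintro ⟨b, d, h⟩
    exact ⟨_, h, (mulVec_one_zero !![a, b; c, d]).symm⟩

theorem isotropic_iff_of_isUnit {a c : A} (ha : IsUnit a) :
    s c * a + s a * c = 0 ↔ ∃ u, s u = -u ∧ c = u * a := by
  constructor
  · intro h
    obtain ⟨e, he⟩ := ha.exists_left_inv
    have hse : s e * s a = 1 := by rw [← map_mul, he, map_one]
    refine ⟨c * e, ?_, by linear_combination (-c) * he⟩
    rw [map_mul]
    linear_combination (s e * e) * h - (s c * s e) * he - (c * e) * hse
  · rintro ⟨u, hu, rfl⟩
    rw [map_mul, hu]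
    ring

theorem mem_baseOrbit_iff [IsLocalRing A] (hs : Involutive s) {a c : A} :
    ![a, c] ∈ baseOrbit s ↔ s c * a + s a * c = 0 ∧ (IsUnit a ∨ IsUnit c) := by
  have isUnit_of_star {x : A} (hx : IsUnit (s x)) : IsUnit x := hs x ▸ hx.map s
  rw [mem_baseOrbit_iff_exists]
  simp only [mem_SLstarSet_iff]
  constructor
  · rintro ⟨b, d, ⟨h_iso, h_one⟩, -⟩
    refine ⟨h_iso, (IsLocalRing.isUnit_or_isUnit_of_add_one h_one).symm.imp ?_ ?_⟩ <;>
      exact fun h ↦ isUnit_of_star (isUnit_of_mul_isUnit_left h)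
  · rintro ⟨h_iso, ha | hc⟩
    · obtain ⟨e, he⟩ := ha.exists_left_inv
      have hse : s e * s a = 1 := by rw [← map_mul, he, map_one]
      refine ⟨0, s e, ⟨h_iso, ?_⟩, ?_, ?_⟩
      · linear_combination hse
      · rw [hs, map_zero]
        linear_combination he
      · simp
    · obtain ⟨e, he⟩ := hc.exists_left_inv
      have hse : s e * s c = 1 := by rw [← map_mul, he, map_one]
      refine ⟨s e, 0, ⟨h_iso, ?_⟩, ?_, ?_⟩
      · linear_combination hse
      · rw [hs, map_zero]
        linear_combination he
      · simp

theorem baseOrbit_eq_union [IsLocalRing A] (hs : Involutive s) :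
    baseOrbit s = unitFirstColumns s ∪ nonunitFirstColumns s := by
  ext v
  constructor
  · intro hv
    obtain ⟨a, c, rfl⟩ : ∃ a c, v = ![a, c] := ⟨v 0, v 1, (FinVec.etaExpand_eq v).symm⟩
    obtain ⟨h_iso, h_unit⟩ := (mem_baseOrbit_iff hs).1 hv
    by_cases ha : IsUnit a
    · obtain ⟨u, hu, rfl⟩ := (isotropic_iff_of_isUnit ha).1 h_iso
      exact .inl ⟨a, u, ha, hu, rfl⟩
    · have hc := h_unit.resolve_left ha
      obtain ⟨u, hu, rfl⟩ := (isotropic_iff_of_isUnit hc).1 (by rwa [add_comm] at h_iso)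
      exact .inr ⟨c, u, hc, hu, fun h ↦ ha (h.mul hc), rfl⟩
  · rintro (⟨a, u, ha, hu, rfl⟩ | ⟨c, u, hc, hu, -, rfl⟩)
    · exact (mem_baseOrbit_iff hs).2 ⟨(isotropic_iff_of_isUnit ha).2 ⟨u, hu, rfl⟩, .inl ha⟩
    · refine (mem_baseOrbit_iff hs).2 ⟨?_, .inr hc⟩
      rw [add_comm]
      exact (isotropic_iff_of_isUnit hc).2 ⟨u, hu, rfl⟩

theorem disjoint_unitFirstColumns_nonunitFirstColumns :
    Disjoint (unitFirstColumns s) (nonunitFirstColumns s) := by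
  rw [Set.disjoint_left]
  rintro _ ⟨a, u, ha, -, rfl⟩ ⟨c, w, -, -, hw, h⟩
  have haw : a = w * c := congrFun h 0
  exact hw (isUnit_of_mul_isUnit_left (haw ▸ ha))

theorem ncard_unit_multiples {α : Type*} {f : A → A → α} (hf : Injective2 f) (T : Set A) :
    {v | ∃ a u, IsUnit a ∧ u ∈ T ∧ v = f a (u * a)}.ncard =
      {a : A | IsUnit a}.ncard * T.ncard := by
  rw [← Set.ncard_prod]
  refine (Set.ncard_congr (fun x _ ↦ f x.1 (x.2 * x.1)) ?_ ?_ ?_).symm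
  · rintro ⟨a, u⟩ ⟨ha, hu⟩
    exact ⟨a, u, ha, hu, rfl⟩
  · rintro ⟨a, u⟩ ⟨a', u'⟩ ⟨ha, -⟩ - h
    obtain ⟨rfl, hu⟩ := hf h
    exact congrArg _ (IsUnit.mul_right_cancel ha hu)
  · rintro _ ⟨a, u, ha, hu, rfl⟩
    exact ⟨(a, u), ⟨ha, hu⟩, rfl⟩

theorem ncard_unitFirstColumns :
    (unitFirstColumns s).ncard = {a : A | IsUnit a}.ncard * Nat.card (skewElements s) :=
  ncard_unit_multiples (f := fun x y : A ↦ ![x, y])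
    (fun _ _ _ _ h ↦ ⟨congrFun h 0, congrFun h 1⟩) (skewElements s : Set A)

theorem ncard_nonunitFirstColumns :
    (nonunitFirstColumns s).ncard =
      {a : A | IsUnit a}.ncard * {u ∈ skewElements s | ¬ IsUnit u}.ncard := by
  have h := ncard_unit_multiples (f := fun x y : A ↦ ![y, x])
    (fun _ _ _ _ h ↦ ⟨congrFun h 1, congrFun h 0⟩) {u ∈ skewElements s | ¬ IsUnit u}
  simpa only [nonunitFirstColumns, Set.mem_ofPred_eq, mem_skewElements, and_assoc] using h

theorem ncard_baseOrbit [IsLocalRing A] [Finite A] (hs : Involutive s) :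
    (baseOrbit s).ncard = {a : A | IsUnit a}.ncard *
      (Nat.card (skewElements s) + {u ∈ skewElements s | ¬ IsUnit u}.ncard) := by
  rw [baseOrbit_eq_union hs, Set.ncard_union_eq disjoint_unitFirstColumns_nonunitFirstColumns,
    ncard_unitFirstColumns, ncard_nonunitFirstColumns, mul_add]

end FirstColumn

section ResidueField

variable {A F : Type*} [CommRing A] [Field F] (f : A →+* F) [IsLocalHom f]

theorem ncard_nonunits_mul_card_map (S : AddSubgroup A) :
    {u ∈ S | ¬ IsUnit u}.ncard * Nat.card (S.map f.toAddMonoidHom) = Nat.card S := by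
  have h_ker : {u ∈ S | ¬ IsUnit u} = (f.toAddMonoidHom.ker ⊓ S : AddSubgroup A) := by
    ext u
    simp [← isUnit_map_iff f u, and_comm]
  rw [h_ker, ← Nat.card_coe_set_eq, ← AddSubgroup.relIndex_ker, ← AddSubgroup.inf_relIndex_right]
  have h := AddSubgroup.relIndex_mul_relIndex ⊥ (f.toAddMonoidHom.ker ⊓ S) S bot_le inf_le_right
  rwa [AddSubgroup.relIndex_bot_left, AddSubgroup.relIndex_bot_left] at h

theorem ncard_nonunits_mul_card (hf : Surjective f) :
    {a : A | ¬ IsUnit a}.ncard * Nat.card F = Nat.card A := by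
  have h := ncard_nonunits_mul_card_map f ⊤
  rw [AddSubgroup.map_top_of_surjective f.toAddMonoidHom hf, AddSubgroup.card_top,
    AddSubgroup.card_top] at h
  simpa only [AddSubgroup.mem_top, true_and] using h

theorem ncard_isUnit [Finite A] (hf : Surjective f) :
    {a : A | IsUnit a}.ncard = (Nat.card F - 1) * {a : A | ¬ IsUnit a}.ncard := by
  rw [← compl_compl {a : A | IsUnit a}, Set.ncard_compl, ← ncard_nonunits_mul_card f hf, mul_comm,
    Nat.sub_mul, one_mul]
  rfl

end ResidueField

namespace TruncPoly

section CommRing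

variable {K : Type} [CommRing K] {n : ℕ}

theorem isNilpotent_root : IsNilpotent (AdjoinRoot.root (X ^ n : K[X])) :=
  ⟨n, by rw [← AdjoinRoot.mk_X, ← map_pow, AdjoinRoot.mk_self]⟩

variable [NeZero n]

variable (K n) in
/-- The evaluation `A_n → K` at `x = 0`; it needs `n ≠ 0`, as `A_0` is the zero ring. -/
def constCoeff : TruncPoly K n →+* K :=
  AdjoinRoot.lift (RingHom.id K) 0 (by simp [NeZero.ne n])

@[simp]
theorem constCoeff_of (z : K) : constCoeff K n (AdjoinRoot.of _ z) = z := by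
  simp [constCoeff]

@[simp]
theorem constCoeff_root : constCoeff K n (AdjoinRoot.root _) = 0 := by
  simp [constCoeff]

theorem constCoeff_surjective : Surjective (constCoeff K n) :=
  fun z ↦ ⟨_, constCoeff_of z⟩

theorem exists_eq_root_mul_add_constCoeff (a : TruncPoly K n) :
    ∃ b, a = AdjoinRoot.root _ * b + AdjoinRoot.of _ (constCoeff K n a) := by
  induction a using AdjoinRoot.induction_on with
  | ih r =>
    refine ⟨AdjoinRoot.mk _ r.divX, ?_⟩
    conv_lhs => rw [← r.X_mul_divX_add]
    simp [constCoeff, coeff_zero_eq_eval_zero, eval₂_at_zero]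

instance : IsLocalHom (constCoeff K n) where
  map_nonunit a ha := by
    obtain ⟨b, hb⟩ := exists_eq_root_mul_add_constCoeff a
    rw [hb]
    exact ((Commute.all _ _).isNilpotent_mul_right isNilpotent_root).isUnit_add_right_of_commute
      (ha.map _) (Commute.all _ _)

end CommRing

section Star

variable {K : Type} [CommRing K] (σ : K →+* K) {n : ℕ}

@[simp]
theorem trStar_of (z : K) : trStar K σ n (AdjoinRoot.of _ z) = AdjoinRoot.of _ (σ z) := by
  simp [trStar]

@[simp]
theorem trStar_root : trStar K σ n (AdjoinRoot.root _) = -AdjoinRoot.root _ := by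
  simp [trStar]

variable {σ}

theorem trStar_involutive (hσ : Involutive σ) : Involutive (trStar K σ n) := by
  have h : (trStar K σ n).comp (trStar K σ n) = RingHom.id _ :=
    AdjoinRoot.ringHom_ext (RingHom.ext fun z ↦ by simp [hσ z]) (by simp)
  exact RingHom.congr_fun h

theorem constCoeff_trStar [NeZero n] (a : TruncPoly K n) :
    constCoeff K n (trStar K σ n a) = σ (constCoeff K n a) := by
  have h : (constCoeff K n).comp (trStar K σ n) = σ.comp (constCoeff K n) :=
    AdjoinRoot.ringHom_ext (RingHom.ext fun z ↦ by simp) (by simp)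
  exact RingHom.congr_fun h a

theorem map_constCoeff_skewElements [NeZero n] :
    (skewElements (trStar K σ n)).map (constCoeff K n).toAddMonoidHom = skewElements σ := by
  ext z
  constructor
  · rintro ⟨a, ha, rfl⟩
    change σ (constCoeff K n a) = -constCoeff K n a
    rw [← constCoeff_trStar, mem_skewElements.1 ha, map_neg]
  · intro hz
    refine ⟨AdjoinRoot.of _ z, ?_, constCoeff_of (n := n) z⟩
    change trStar K σ n (AdjoinRoot.of _ z) = -AdjoinRoot.of _ z
    rw [trStar_of, mem_skewElements.1 hz, map_neg]

end Star

section Field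

variable (K : Type) [Field K] (n : ℕ)

instance : Module.Finite K (TruncPoly K n) :=
  (AdjoinRoot.powerBasis' (monic_X_pow n)).finite

instance [Finite K] : Finite (TruncPoly K n) :=
  Module.finite_of_finite K

instance [NeZero n] : IsLocalRing (TruncPoly K n) :=
  (constCoeff K n).domain_isLocalRing

theorem natCard : Nat.card (TruncPoly K n) = Nat.card K ^ n := by
  rw [Module.natCard_eq_pow_finrank (K := K), (AdjoinRoot.powerBasis' (monic_X_pow n)).finrank,
    AdjoinRoot.powerBasis'_dim, natDegree_X_pow]

variable {K n}

theorem ncard_isUnit_eq [Finite K] [NeZero n] :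
    {a : TruncPoly K n | IsUnit a}.ncard = (Nat.card K - 1) * Nat.card K ^ (n - 1) := by
  rw [ncard_isUnit (constCoeff K n) constCoeff_surjective]
  congr 1
  refine Nat.eq_of_mul_eq_mul_right (Nat.card_pos (α := K)) ?_
  rw [ncard_nonunits_mul_card (constCoeff K n) constCoeff_surjective, natCard,
    pow_sub_one_mul (NeZero.ne n)]

variable {q : ℕ} {σ : K →+* K}

theorem card_skewElements (hK : Nat.card K = q ^ 2) (hσ : Involutive σ)
    (hσ_ne : σ ≠ RingHom.id K) : Nat.card (skewElements (trStar K σ n)) = q ^ n := by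
  obtain ⟨θ, hθ⟩ := exists_isUnit_sub_of_ne_id hσ_ne
  have h_unit : IsUnit (AdjoinRoot.of (X ^ n) θ - trStar K σ n (AdjoinRoot.of _ θ)) := by
    simpa using hθ.map (AdjoinRoot.of (X ^ n : K[X]))
  refine Nat.pow_left_injective two_ne_zero ?_
  change _ ^ 2 = (q ^ n) ^ 2
  rw [card_skewElements_sq (trStar_involutive hσ) h_unit, natCard, hK, pow_right_comm]

theorem ncard_nonunit_skewElements [Finite K] [NeZero n] (hK : Nat.card K = q ^ 2)
    (hσ : Involutive σ) (hσ_ne : σ ≠ RingHom.id K) :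
    {u ∈ skewElements (trStar K σ n) | ¬ IsUnit u}.ncard = q ^ (n - 1) := by
  obtain ⟨θ, hθ⟩ := exists_isUnit_sub_of_ne_id hσ_ne
  have hq : 0 < q := Nat.pos_of_ne_zero fun h ↦ Nat.card_pos.ne' (hK.trans (by simp [h]))
  have h_card : Nat.card (skewElements σ) = q :=
    Nat.pow_left_injective two_ne_zero ((card_skewElements_sq hσ hθ).trans hK)
  have h := ncard_nonunits_mul_card_map (constCoeff K n) (skewElements (trStar K σ n))
  rw [map_constCoeff_skewElements, h_card, card_skewElements hK hσ hσ_ne] at h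
  exact Nat.eq_of_mul_eq_mul_right hq (h.trans (pow_sub_one_mul (NeZero.ne n) q).symm)

end Field

end TruncPoly

theorem involutive_of_finrank_eq_two {k K : Type*} [Field k] [Field K] [Algebra k K]
    (h : Module.finrank k K = 2) (σ : K →ₐ[k] K) : Involutive σ := by
  have : FiniteDimensional k K := .of_finrank_pos (by lia)
  let τ : K ≃ₐ[k] K := .ofBijective σ σ.bijective
  have h_le : orderOf τ ≤ 2 := (orderOf_le_card_univ.trans AlgEquiv.card_le).trans_eq h
  have h_dvd : orderOf τ ∣ 2 := by
    have := orderOf_pos τ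
    interval_cases orderOf τ <;> decide
  exact fun z ↦ AlgEquiv.congr_fun (orderOf_dvd_iff_pow_eq_one.1 h_dvd) z

theorem involutive_of_card_eq_sq {q : ℕ} {k K : Type*} [Field k] [Fintype k] [Field K]
    [Fintype K] [Algebra k K] (hk : Fintype.card k = q) (hK : Fintype.card K = q ^ 2)
    {σ : K →+* K} (hσ : ∀ c : k, σ (algebraMap k K c) = algebraMap k K c) : Involutive σ := by
  have hq : 2 ≤ q := hk ▸ Fintype.one_lt_card
  have h_finrank : Module.finrank k K = 2 := by
    apply Nat.pow_right_injective hq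
    change q ^ _ = q ^ 2
    rw [← hK, Module.card_eq_pow_finrank (K := k), hk]
  exact involutive_of_finrank_eq_two h_finrank { σ with commutes' := hσ }

theorem orbit_SLstar_truncPoly_general
    {q : ℕ} {K : Type} [Field K] [Finite K] (hK : Nat.card K = q ^ 2)
    {σ : K →+* K} (hσ : Involutive σ) (hσ_ne : σ ≠ RingHom.id K) {n : ℕ} (hn : 0 < n) :
    ({v : Fin 2 → TruncPoly K n |
        ∃ g ∈ SLstarSet (TruncPoly K n) (trStar K σ n), v = g.mulVec ![1, 0]} =
      {v : Fin 2 → TruncPoly K n | ∃ a u : TruncPoly K n,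
          IsUnit a ∧ trStar K σ n u = -u ∧ v = ![a, u * a]} ∪
      {v : Fin 2 → TruncPoly K n | ∃ c u : TruncPoly K n,
          IsUnit c ∧ trStar K σ n u = -u ∧ ¬ IsUnit u ∧ v = ![u * c, c]}) ∧
    Nat.card {v : Fin 2 → TruncPoly K n |
        ∃ g ∈ SLstarSet (TruncPoly K n) (trStar K σ n), v = g.mulVec ![1, 0]} =
      (q ^ 2 - 1) * q ^ (3 * n - 3) * (q + 1) := by
  have : NeZero n := ⟨hn.ne'⟩
  have h_star : Involutive (trStar K σ n) := TruncPoly.trStar_involutive hσ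
  refine ⟨baseOrbit_eq_union h_star, ?_⟩
  change Nat.card (baseOrbit (trStar K σ n)) = _
  rw [Nat.card_coe_set_eq, ncard_baseOrbit h_star, TruncPoly.ncard_isUnit_eq, hK,
    TruncPoly.card_skewElements hK hσ hσ_ne, TruncPoly.ncard_nonunit_skewElements hK hσ hσ_ne]
  obtain ⟨m, rfl⟩ : ∃ m, n = m + 1 := ⟨n - 1, by lia⟩
  rw [show 3 * (m + 1) - 3 = 3 * m by lia, Nat.add_sub_cancel]
  ring

/-- the orbit of `(1,0)ᵀ` under the left-multiplication action of
`SL_*^1(2,A_n)` on column vectors equals `O₁ ∪ O₂`, and it has cardinality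
`(q²−1)·q^{3n−3}·(q+1)`. -/
theorem orbit_SLstar_truncPoly
    (p t q : ℕ) (hp : p.Prime) (hp2 : Odd p) (ht : 0 < t) (hq : q = p ^ t)
    (k K : Type) [Field k] [Fintype k] [Field K] [Fintype K] [Algebra k K]
    (hcardk : Fintype.card k = q) (hcardK : Fintype.card K = q ^ 2)
    (Δ : K) (hΔ : Δ ∉ Set.range (algebraMap k K))
    (hΔ2 : Δ ^ 2 ∈ Set.range (algebraMap k K))
    (σ : K →+* K) (hσk : ∀ c : k, σ (algebraMap k K c) = algebraMap k K c)
    (hσne : σ ≠ RingHom.id K) (hσΔ : σ Δ = -Δ)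
    (n : ℕ) (hn : 0 < n) :
    ({v : Fin 2 → TruncPoly K n |
        ∃ g ∈ SLstarSet (TruncPoly K n) (trStar K σ n), v = g.mulVec ![1, 0]} =
      {v : Fin 2 → TruncPoly K n | ∃ a u : TruncPoly K n,
          IsUnit a ∧ trStar K σ n u = -u ∧ v = ![a, u * a]} ∪
      {v : Fin 2 → TruncPoly K n | ∃ c u : TruncPoly K n,
          IsUnit c ∧ trStar K σ n u = -u ∧ ¬ IsUnit u ∧ v = ![u * c, c]}) ∧
    Nat.card {v : Fin 2 → TruncPoly K n |
        ∃ g ∈ SLstarSet (TruncPoly K n) (trStar K σ n), v = g.mulVec ![1, 0]} =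
      (q ^ 2 - 1) * q ^ (3 * n - 3) * (q + 1) :=
  orbit_SLstar_truncPoly_general (Nat.card_eq_fintype_card.trans hcardK)
    (involutive_of_card_eq_sq hcardk hcardK hσk) hσne hn
end
end

section
/- Let a and b be two non-invertible antisymmetric elements of A_n. Then there exists an invertible antisymmetric element v ∈ A_n such that a − v^{−1} and b + v are both invertible antisymmetric elements of A_n. -/
open Polynomial Matrix

noncomputable section

/-!
An element of `K[x]/⟨xⁿ⟩` whose constant term is a unit is the sum of a unit and a nilpotent, so
`K[x]/⟨xⁿ⟩` is a local ring whenever it is nontrivial and `K` is local. In a local ring, adding a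
unit to a non-unit gives a unit. Hence any antisymmetric unit serves as `v`, and the constant `Δ`
is one.
-/

theorem isUnit_add_of_not_isUnit_of_isUnit {R : Type*} [CommRing R] [IsLocalRing R] {x u : R}
    (hx : ¬ IsUnit x) (hu : IsUnit u) : IsUnit (x + u) := by
  by_contra hxu
  have hx_neg : ¬ IsUnit (-x) := by rwa [IsUnit.neg_iff]
  have hu_nonunit : x + u + -x ∈ nonunits R := IsLocalRing.nonunits_add hxu hx_neg
  rw [add_neg_cancel_comm] at hu_nonunit
  exact hu_nonunit hu

theorem isNilpotent_root_X_pow (R : Type*) [CommRing R] (n : ℕ) :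
    IsNilpotent (AdjoinRoot.root (X ^ n : R[X])) :=
  ⟨n, by rw [← AdjoinRoot.mk_X, ← map_pow, AdjoinRoot.mk_self]⟩

theorem isUnit_mk_X_pow_of_isUnit_coeff_zero {R : Type*} [CommRing R] (n : ℕ) {f : R[X]}
    (hf : IsUnit (f.coeff 0)) : IsUnit (AdjoinRoot.mk (X ^ n) f) := by
  have hnil : IsNilpotent (AdjoinRoot.mk (X ^ n) f.divX * AdjoinRoot.root (X ^ n)) :=
    (Commute.all _ _).isNilpotent_mul_left (isNilpotent_root_X_pow R n)
  rw [← divX_mul_X_add f, map_add, map_mul, AdjoinRoot.mk_X, AdjoinRoot.mk_C]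
  exact hnil.isUnit_add_right_of_commute (hf.map _) (Commute.all _ _)

theorem isLocalRing_adjoinRoot_X_pow (R : Type*) [CommRing R] [IsLocalRing R] (n : ℕ)
    [Nontrivial (AdjoinRoot (X ^ n : R[X]))] : IsLocalRing (AdjoinRoot (X ^ n : R[X])) := by
  refine .of_isUnit_or_isUnit_one_sub_self fun a => ?_
  obtain ⟨f, rfl⟩ := AdjoinRoot.mk_surjective a
  rw [← map_one (AdjoinRoot.mk (X ^ n)), ← map_sub]
  refine (IsLocalRing.isUnit_or_isUnit_one_sub_self (f.coeff 0)).imp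
    (isUnit_mk_X_pow_of_isUnit_coeff_zero n) fun h => isUnit_mk_X_pow_of_isUnit_coeff_zero n ?_
  rwa [coeff_sub, coeff_one_zero]

theorem trStar_of {K : Type} [CommRing K] (σ : K →+* K) (n : ℕ) (c : K) :
    trStar K σ n (AdjoinRoot.of (X ^ n) c) = AdjoinRoot.of (X ^ n) (σ c) :=
  AdjoinRoot.lift_of _

theorem map_units_inv_eq_neg_inv {F M N : Type*} [Monoid M] [Monoid N] [HasDistribNeg N]
    [FunLike F M N] [MonoidHomClass F M N] (f : F) {u : Mˣ} {w : Nˣ} (h : f u = -w) :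
    f ↑u⁻¹ = -↑w⁻¹ := by
  have hmap : Units.map (f : M →* N) u = -w := Units.ext h
  calc f ↑u⁻¹ = ↑(Units.map (f : M →* N) u)⁻¹ := rfl
    _ = -↑w⁻¹ := by rw [hmap, inv_neg, Units.val_neg]

theorem exists_asym_unit_shift_general {K : Type} [CommRing K] [IsLocalRing K] (σ : K →+* K)
    (Δ : Kˣ) (hσΔ : σ Δ = -Δ) (n : ℕ) (a b : TruncPoly K n)
    (ha : trStar K σ n a = -a) (ha' : ¬ IsUnit a)
    (hb : trStar K σ n b = -b) (hb' : ¬ IsUnit b) :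
    ∃ v : (TruncPoly K n)ˣ, trStar K σ n ↑v = -(↑v : TruncPoly K n) ∧
      IsUnit (a - (↑v⁻¹ : TruncPoly K n)) ∧
      trStar K σ n (a - (↑v⁻¹ : TruncPoly K n)) = -(a - (↑v⁻¹ : TruncPoly K n)) ∧
      IsUnit (b + ↑v) ∧
      trStar K σ n (b + ↑v) = -(b + (↑v : TruncPoly K n)) := by
  have : Nontrivial (TruncPoly K n) := not_subsingleton_iff_nontrivial.mp fun _ =>
    ha' (isUnit_of_subsingleton a)
  have := isLocalRing_adjoinRoot_X_pow K n
  let v : (TruncPoly K n)ˣ := Units.map (AdjoinRoot.of (X ^ n : K[X]) : K →* TruncPoly K n) Δ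
  have hv : trStar K σ n v = -v := by
    change trStar K σ n (AdjoinRoot.of (X ^ n) (Δ : K)) = -AdjoinRoot.of (X ^ n) (Δ : K)
    rw [trStar_of, hσΔ, map_neg]
  have hv_inv : trStar K σ n ↑v⁻¹ = -↑v⁻¹ := map_units_inv_eq_neg_inv _ hv
  refine ⟨v, hv, ?_, ?_, isUnit_add_of_not_isUnit_of_isUnit hb' v.isUnit, ?_⟩
  · rw [sub_eq_add_neg]
    exact isUnit_add_of_not_isUnit_of_isUnit ha' v⁻¹.isUnit.neg
  · rw [map_sub, ha, hv_inv, neg_sub', sub_neg_eq_add]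
  · rw [map_add, hb, hv, neg_add]

/-- given non-invertible antisymmetric `a`, `b` in `A_n`, there is an
invertible antisymmetric `v` with `a − v⁻¹` and `b + v` invertible antisymmetric. -/
theorem exists_asym_unit_shift
    (p t q : ℕ) (hp : p.Prime) (hp2 : Odd p) (ht : 0 < t) (hq : q = p ^ t)
    (k K : Type) [Field k] [Fintype k] [Field K] [Fintype K] [Algebra k K]
    (hcardk : Fintype.card k = q) (hcardK : Fintype.card K = q ^ 2)
    (Δ : K) (hΔ : Δ ∉ Set.range (algebraMap k K))
    (hΔ2 : Δ ^ 2 ∈ Set.range (algebraMap k K))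
    (σ : K →+* K) (hσk : ∀ c : k, σ (algebraMap k K c) = algebraMap k K c)
    (hσne : σ ≠ RingHom.id K) (hσΔ : σ Δ = -Δ)
    (n : ℕ) (hn : 0 < n)
    (a b : TruncPoly K n)
    (ha : trStar K σ n a = -a) (ha' : ¬ IsUnit a)
    (hb : trStar K σ n b = -b) (hb' : ¬ IsUnit b) :
    ∃ v : (TruncPoly K n)ˣ, trStar K σ n ↑v = -(↑v : TruncPoly K n) ∧
      IsUnit (a - (↑v⁻¹ : TruncPoly K n)) ∧
      trStar K σ n (a - (↑v⁻¹ : TruncPoly K n)) = -(a - (↑v⁻¹ : TruncPoly K n)) ∧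
      IsUnit (b + ↑v) ∧
      trStar K σ n (b + ↑v) = -(b + (↑v : TruncPoly K n)) :=
  have hΔ0 : Δ ≠ 0 := fun h => hΔ ⟨0, by rw [map_zero, h]⟩
  exists_asym_unit_shift_general σ (Units.mk0 Δ hΔ0) hσΔ n a b ha ha' hb hb'
end
end

section
/- The group SL_*^1(2,A_n) is isomorphic to the group presented by generators H_t (t ∈ A_n^×), U_s (s ∈ A_n^asym), W, subject to the relations H_{t₁}H_{t₂} = H_{t₁t₂}, U_{s₁}U_{s₂} = U_{s₁+s₂}, H_t U_s = U_{t s t*} H_t, W² = 1, H_t W = W H_{(t*)^{−1}}, and W U_{t^{−1}} W U_{−t} W U_{t^{−1}} = H_{−t} for invertible antisymmetric t; the isomorphism sends H_t, U_s, W to the matrices h_t, u_s, w respectively. -/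
/-!
Every element of the presented group `G` lies in the big cell `P = {U x * H t * W * U y}` or in
`W * P`. Only stability of `P ∪ W * P` under left multiplication by `U s` needs an argument. The
last relation gives `W * U v * W = U v⁻¹ * H (-v⁻¹) * W * U v⁻¹` for an antisymmetric unit `v`, so
that `W * U x * W * H t * U y` is in `P` if `x` is a unit. If `x` is not a unit but `s` is, then
`U s * W * U x * W` becomes `W * U a * H b * W * U (s⁻¹ + x) * W`, and `s⁻¹ + x` is a unit because
the ring is local. A nonunit `s` is `(s - e) + e`, a sum of two antisymmetric units, for any
antisymmetric unit `e`.

The matrix `u_x h_t w u_y` has the unit `(t*)⁻¹` in its lower left corner and determines `x`, `t`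
and `y`, whence injectivity. A matrix of `SL_*^1(2,A)` whose lower left entry is a unit is of this
form; any other one has a unit in its upper left corner, and is brought to this form by `w`.
-/

open Polynomial Matrix

noncomputable section

/-- The diagonal generator `h_t = [[t,0],[0,(t*)⁻¹]]`. -/
def hMat (A : Type) [CommRing A] (st : A →+* A) (u : Aˣ) : Matrix (Fin 2) (Fin 2) A :=
  !![(u : A), 0; 0, ((Units.map (st : A →* A) u)⁻¹ : Aˣ)]

/-- The unipotent generator `u_s = [[1,s],[0,1]]`. -/
def uMat (A : Type) [CommRing A] (s : A) : Matrix (Fin 2) (Fin 2) A := !![1, s; 0, 1]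

/-- The Weyl element `w = [[0,1],[1,0]]`. -/
def wMat (A : Type) [CommRing A] : Matrix (Fin 2) (Fin 2) A := !![0, 1; 1, 0]

/-- The Bruhat generators `h_t` (`t` a unit), `u_s` (`s` antisymmetric) and `w`. -/
def bruhatGens (A : Type) [CommRing A] (st : A →+* A) : Set (Matrix (Fin 2) (Fin 2) A) :=
  {m | (∃ u : Aˣ, m = hMat A st u) ∨ (∃ s : A, st s = -s ∧ m = uMat A s) ∨ m = wMat A}

/-- Abstract generators for the Bruhat presentation: `H t` for units `t`,
`U s` for antisymmetric `s`, and `W`. -/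
inductive BGen (A : Type) [CommRing A] (st : A →+* A) : Type
  | H : Aˣ → BGen A st
  | U : {s : A // st s = -s} → BGen A st
  | W : BGen A st

/-- The relators of the Bruhat presentation. -/
def bruhatRels (A : Type) [CommRing A] (st : A →+* A) : Set (FreeGroup (BGen A st)) :=
  {r | (∃ t₁ t₂ : Aˣ,
          r = FreeGroup.of (BGen.H t₁) * FreeGroup.of (BGen.H t₂) * (FreeGroup.of (BGen.H (t₁ * t₂)))⁻¹) ∨
       (∃ s₁ s₂ s₃ : {s : A // st s = -s}, (s₃ : A) = ↑s₁ + ↑s₂ ∧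
          r = FreeGroup.of (BGen.U s₁) * FreeGroup.of (BGen.U s₂) * (FreeGroup.of (BGen.U s₃))⁻¹) ∨
       (∃ (u : Aˣ) (s s' : {s : A // st s = -s}), (s' : A) = ↑u * ↑s * st ↑u ∧
          r = FreeGroup.of (BGen.H u) * FreeGroup.of (BGen.U s) * (FreeGroup.of (BGen.U s') * FreeGroup.of (BGen.H u))⁻¹) ∨
       (r = FreeGroup.of (BGen.W : BGen A st) * FreeGroup.of BGen.W) ∨
       (∃ u : Aˣ,
          r = FreeGroup.of (BGen.H u) * FreeGroup.of BGen.W *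
            (FreeGroup.of BGen.W * FreeGroup.of (BGen.H ((Units.map (st : A →* A) u)⁻¹)))⁻¹) ∨
       (∃ (u : Aˣ) (s₁ s₂ : {s : A // st s = -s}),
          st ↑u = -(↑u : A) ∧ (s₁ : A) = ↑u⁻¹ ∧ (s₂ : A) = -↑u ∧
          r = FreeGroup.of BGen.W * FreeGroup.of (BGen.U s₁) * FreeGroup.of BGen.W * FreeGroup.of (BGen.U s₂) *
              FreeGroup.of BGen.W * FreeGroup.of (BGen.U s₁) * (FreeGroup.of (BGen.H (-u)))⁻¹)}

section CoefficientRing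

lemma algHom_involutive_of_finrank_eq_two {k K : Type*} [Field k] [Field K] [Algebra k K]
    (hK : Module.finrank k K = 2) (τ : K →ₐ[k] K) : Function.Involutive τ := by
  have : FiniteDimensional k K := .of_finrank_pos (by omega)
  obtain ⟨τ, rfl⟩ := (algEquivEquivAlgHom k K).surjective τ
  have hcard : Fintype.card Gal(K/k) ≤ 2 := hK ▸ AlgEquiv.card_le
  have hdvd : Fintype.card Gal(K/k) ∣ 2 := by
    have : 0 < Fintype.card Gal(K/k) := Fintype.card_pos
    interval_cases Fintype.card Gal(K/k) <;> norm_num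
  have hsq : τ ^ 2 = 1 := orderOf_dvd_iff_pow_eq_one.mp (orderOf_dvd_card.trans hdvd)
  exact fun x ↦ by simpa [pow_two] using DFunLike.congr_fun hsq x

lemma ringHom_involutive_of_card_eq_sq {k K : Type*} [Field k] [Fintype k] [Field K] [Fintype K]
    [Algebra k K] (hcard : Fintype.card K = Fintype.card k ^ 2) {σ : K →+* K}
    (hσ : ∀ c : k, σ (algebraMap k K c) = algebraMap k K c) : Function.Involutive σ :=
  have hK : Module.finrank k K = 2 :=
    Nat.pow_right_injective Fintype.one_lt_card (Module.card_eq_pow_finrank.symm.trans hcard)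
  algHom_involutive_of_finrank_eq_two hK { σ with commutes' := hσ }

variable {K : Type} [CommRing K] {σ : K →+* K} {n : ℕ}

lemma trStar_of_s8 (a : K) : trStar K σ n (AdjoinRoot.of _ a) = AdjoinRoot.of _ (σ a) := by
  simp [trStar]

lemma trStar_root : trStar K σ n (AdjoinRoot.root _) = -AdjoinRoot.root _ := by
  simp [trStar]

lemma trStar_involutive (hσ : Function.Involutive σ) (n : ℕ) :
    Function.Involutive (trStar K σ n) := by
  have hcomp : (trStar K σ n).comp (trStar K σ n) = RingHom.id _ := by
    refine AdjoinRoot.ringHom_ext (RingHom.ext fun a ↦ ?_) ?_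
    · simp [trStar_of_s8, hσ a]
    · simp [trStar_root]
  exact DFunLike.congr_fun hcomp

lemma exists_unit_trStar_eq_neg {Δ : K} (hΔ : IsUnit Δ) (hσΔ : σ Δ = -Δ) (n : ℕ) :
    ∃ e : (TruncPoly K n)ˣ, trStar K σ n e = -e :=
  ⟨(hΔ.map (AdjoinRoot.of (X ^ n))).unit, by simp [trStar_of_s8, hσΔ]⟩

lemma isUnit_truncPoly_mk {f : K[X]} (hf : IsUnit (f.coeff 0)) :
    IsUnit (AdjoinRoot.mk (X ^ n) f : TruncPoly K n) := by
  have hroot : IsNilpotent (AdjoinRoot.root (X ^ n : K[X])) :=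
    ⟨n, by rw [← AdjoinRoot.mk_X, ← map_pow, AdjoinRoot.mk_self]⟩
  rw [← divX_mul_X_add f, map_add, map_mul, AdjoinRoot.mk_X, AdjoinRoot.mk_C]
  exact ((Commute.all _ _).isNilpotent_mul_left hroot).isUnit_add_right_of_commute
    (hf.map _) (Commute.all _ _)

lemma isLocalRing_truncPoly (K : Type) [CommRing K] [IsLocalRing K] {n : ℕ} (hn : n ≠ 0) :
    IsLocalRing (TruncPoly K n) := by
  have : Nontrivial (TruncPoly K n) :=
    (AdjoinRoot.lift (RingHom.id K) 0 (by simp [hn]) : TruncPoly K n →+* K).domain_nontrivial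
  refine .of_isUnit_or_isUnit_one_sub_self fun a ↦ ?_
  obtain ⟨f, rfl⟩ := AdjoinRoot.mk_surjective a
  refine (IsLocalRing.isUnit_or_isUnit_one_sub_self (f.coeff 0)).imp isUnit_truncPoly_mk fun h ↦ ?_
  rw [← map_one (AdjoinRoot.mk _), ← map_sub]
  exact isUnit_truncPoly_mk (by simpa using h)

end CoefficientRing

section RingWithInvolution

variable {A : Type} [CommRing A] {st : A →+* A}

/-- The additive group of antisymmetric elements `s* = -s` of a ring with involution. Its
underlying type is the subtype indexing the generators `BGen.U`. -/
def antisymmSubgroup (st : A →+* A) : AddSubgroup A where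
  carrier := {s | st s = -s}
  zero_mem' := by simp
  add_mem' {a b} ha hb := by
    simp only [Set.mem_ofPred_eq] at ha hb ⊢
    rw [map_add, ha, hb, neg_add]
  neg_mem' {a} ha := by
    simp only [Set.mem_ofPred_eq] at ha ⊢
    rw [map_neg, ha]

lemma mem_antisymmSubgroup {s : A} : s ∈ antisymmSubgroup st ↔ st s = -s := Iff.rfl

/-- The automorphism `t ↦ (t*)⁻¹` of the unit group, by which `w` acts on the diagonal matrices
`h_t`. -/
def starInv (st : A →+* A) (t : Aˣ) : Aˣ := (Units.map (st : A →* A) t)⁻¹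

lemma star_units_inv (t : Aˣ) : st (t⁻¹ : Aˣ) = starInv st t := by
  rw [starInv, ← map_inv]
  rfl

lemma star_mul_starInv (t : Aˣ) : st t * starInv st t = 1 :=
  (Units.map (st : A →* A) t).mul_inv

lemma starInv_mul (t₁ t₂ : Aˣ) : starInv st (t₁ * t₂) = starInv st t₁ * starInv st t₂ := by
  simp only [starInv, map_mul, mul_inv]

lemma starInv_involutive (hst : Function.Involutive st) : Function.Involutive (starInv st) :=
  fun t ↦ Units.ext <| by simp [starInv, hst (t : A)]

lemma starInv_of_mem_antisymmSubgroup {t : Aˣ} (ht : (t : A) ∈ antisymmSubgroup st) :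
    starInv st t = -t⁻¹ := by
  have hmap : Units.map (st : A →* A) t = -t :=
    Units.ext (by simpa using mem_antisymmSubgroup.mp ht)
  rw [starInv, hmap, inv_neg]

lemma inv_mem_antisymmSubgroup {t : Aˣ} (ht : (t : A) ∈ antisymmSubgroup st) :
    ((t⁻¹ : Aˣ) : A) ∈ antisymmSubgroup st := by
  rw [mem_antisymmSubgroup, star_units_inv, starInv_of_mem_antisymmSubgroup ht, Units.val_neg]

/-- The action `s ↦ t s t*` of the units on the antisymmetric elements. -/
def twist (hst : Function.Involutive st) (t : Aˣ) (s : antisymmSubgroup st) : antisymmSubgroup st :=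
  ⟨t * s * st t, by
    rw [mem_antisymmSubgroup, map_mul, map_mul, hst t, mem_antisymmSubgroup.mp s.2]
    ring⟩

end RingWithInvolution

section Matrices

variable {A : Type} [CommRing A] {st : A →+* A}

lemma hMat_eq (t : Aˣ) : hMat A st t = !![(t : A), 0; 0, (starInv st t : A)] := rfl

lemma hMat_one : hMat A st 1 = 1 := by
  simp [hMat, one_fin_two]

lemma uMat_zero : uMat A 0 = 1 := by
  simp [uMat, one_fin_two]

lemma hMat_mul_hMat (t₁ t₂ : Aˣ) : hMat A st t₁ * hMat A st t₂ = hMat A st (t₁ * t₂) := by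
  simp [hMat_eq, starInv_mul]

lemma uMat_mul_uMat (s₁ s₂ : A) : uMat A s₁ * uMat A s₂ = uMat A (s₁ + s₂) := by
  simp [uMat, add_comm]

lemma hMat_mul_uMat (t : Aˣ) (s : A) :
    hMat A st t * uMat A s = uMat A (t * s * st t) * hMat A st t := by
  have h : t * s * st t * starInv st t = t * s := by rw [mul_assoc, star_mul_starInv, mul_one]
  simp [hMat_eq, uMat, h]

lemma wMat_mul_wMat : wMat A * wMat A = 1 := by
  simp [wMat, one_fin_two]

lemma hMat_mul_wMat (hst : Function.Involutive st) (t : Aˣ) :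
    hMat A st t * wMat A = wMat A * hMat A st (starInv st t) := by
  simp [hMat_eq, wMat, starInv_involutive hst t]

lemma wMat_uMat_braid {t : Aˣ} (ht : (t : A) ∈ antisymmSubgroup st) :
    wMat A * uMat A (t⁻¹ : Aˣ) * wMat A * uMat A (-t) * wMat A * uMat A (t⁻¹ : Aˣ) =
      hMat A st (-t) := by
  have hneg : starInv st (-t) = t⁻¹ := by
    rw [starInv_of_mem_antisymmSubgroup (by simpa using neg_mem ht), inv_neg, neg_neg]
  simp [hMat_eq, hneg, wMat, uMat]

lemma uMat_mul_hMat_mul_wMat_mul_uMat (x y : A) (t : Aˣ) :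
    uMat A x * hMat A st t * wMat A * uMat A y =
      !![x * starInv st t, x * starInv st t * y + t; (starInv st t : A), starInv st t * y] := by
  simp [uMat, hMat_eq, wMat]

lemma uMat_mul_hMat_mul_wMat_mul_uMat_inj (hst : Function.Involutive st) {x y x' y' : A}
    {t t' : Aˣ} (h : uMat A x * hMat A st t * wMat A * uMat A y =
      uMat A x' * hMat A st t' * wMat A * uMat A y') : x = x' ∧ t = t' ∧ y = y' := by
  simp only [uMat_mul_hMat_mul_wMat_mul_uMat] at h
  obtain rfl : t = t' :=
    (starInv_involutive hst).injective (Units.ext (by simpa using congrFun₂ h 1 0))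
  exact ⟨by simpa using congrFun₂ h 0 0, rfl, by simpa using congrFun₂ h 1 1⟩

/-- The group `SL_*^1(2,A)` as a submonoid of the ring of `2 × 2` matrices. -/
def SLstarSubmonoid (st : A →+* A) : Submonoid (Matrix (Fin 2) (Fin 2) A) where
  carrier := SLstarSet A st
  one_mem' := by simp [SLstarSet, mStar]
  mul_mem' {g h} hg hh := by
    simp only [SLstarSet, mStar, Set.mem_ofPred_eq] at hg hh ⊢
    calc ((g * h).map st)ᵀ * jMat A * (g * h)
        = (h.map st)ᵀ * ((g.map st)ᵀ * jMat A * g) * h := by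
          simp only [Matrix.map_mul, transpose_mul, Matrix.mul_assoc]
      _ = jMat A := by rw [hg, hh]

lemma mem_SLstarSubmonoid_iff {a b c d : A} : !![a, b; c, d] ∈ SLstarSubmonoid st ↔
    st c * a + st a * c = 0 ∧ st c * b + st a * d = 1 ∧
      st d * a + st b * c = 1 ∧ st d * b + st b * d = 0 := by
  change mStar A st _ * jMat A * _ = jMat A ↔ _
  simp [mStar, jMat, ← Matrix.ext_iff, Fin.forall_fin_two, mul_apply, Fin.sum_univ_two, and_assoc]

lemma hMat_mem_SLstarSubmonoid (hst : Function.Involutive st) (t : Aˣ) :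
    hMat A st t ∈ SLstarSubmonoid st := by
  have h : st t * starInv st t = 1 := star_mul_starInv t
  have h' : st (starInv st t) * t = 1 := by
    simpa only [map_mul, hst (t : A), map_one, mul_comm] using congrArg st h
  simp [hMat_eq, mem_SLstarSubmonoid_iff, h, h']

lemma uMat_mem_SLstarSubmonoid (s : antisymmSubgroup st) : uMat A s ∈ SLstarSubmonoid st := by
  simp [uMat, mem_SLstarSubmonoid_iff, mem_antisymmSubgroup.mp s.2]

lemma wMat_mem_SLstarSubmonoid : wMat A ∈ SLstarSubmonoid st := by
  simp [wMat, mem_SLstarSubmonoid_iff]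

lemma exists_eq_of_mem_SLstarSubmonoid (hst : Function.Involutive st) {a b d : A} {v : Aˣ}
    (hg : !![a, b; (v : A), d] ∈ SLstarSubmonoid st) :
    ∃ (x : antisymmSubgroup st) (t : Aˣ) (y : antisymmSubgroup st),
      !![a, b; (v : A), d] = uMat A x * hMat A st t * wMat A * uMat A y := by
  obtain ⟨h₁, h₂, -, h₄⟩ := mem_SLstarSubmonoid_iff.mp hg
  obtain ⟨i, hvi, hi⟩ : ∃ i : A, v * i = 1 ∧ i = (v⁻¹ : Aˣ) := ⟨_, v.mul_inv, rfl⟩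
  have hsvi : st v * st i = 1 := by rw [← map_mul, hvi, map_one]
  have hx : st (a * i) = -(a * i) := by
    rw [map_mul]
    linear_combination (st i * i) * h₁ - st a * st i * hvi - a * i * hsvi
  have hb : b = a * i * d + st i := by
    rw [map_mul] at hx
    linear_combination st i * h₂ - b * hsvi - d * hx
  have hy : st (i * d) = -(i * d) := by
    have hsb : st b = -(a * i) * st d + i := by rw [hb, map_add, map_mul, hx, hst i]
    rw [map_mul]
    linear_combination h₄ - st d * hb - d * hsb
  refine ⟨⟨a * i, hx⟩, starInv st v, ⟨i * d, hy⟩, ?_⟩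
  have hstarInv : (starInv st v : A) = st i := by rw [hi, star_units_inv]
  have haiv : a * i * v = a := by rw [mul_assoc, mul_comm i, hvi, mul_one]
  have hvid : v * (i * d) = d := by rw [← mul_assoc, hvi, one_mul]
  have hb' : b = a * (i * d) + st i := by rw [hb, mul_assoc]
  rw [uMat_mul_hMat_mul_wMat_mul_uMat, starInv_involutive hst v, hstarInv]
  simp only [haiv, hvid, hb']

lemma isUnit_or_isUnit_of_mem_SLstarSubmonoid [IsLocalRing A] (hst : Function.Involutive st)
    {a b c d : A} (hg : !![a, b; c, d] ∈ SLstarSubmonoid st) : IsUnit c ∨ IsUnit a := by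
  have isUnit_of_isUnit_star {z : A} (hz : IsUnit (st z)) : IsUnit z := hst z ▸ hz.map st
  obtain ⟨-, h, -, -⟩ := mem_SLstarSubmonoid_iff.mp hg
  exact (IsLocalRing.isUnit_or_isUnit_of_add_one h).imp
    (isUnit_of_isUnit_star ∘ isUnit_of_mul_isUnit_left)
    (isUnit_of_isUnit_star ∘ isUnit_of_mul_isUnit_left)

end Matrices

/-- The group with the Bruhat presentation. -/
abbrev BruhatGroup {A : Type} [CommRing A] (st : A →+* A) : Type :=
  PresentedGroup (bruhatRels A st)

namespace BruhatGroup

variable {A : Type} [CommRing A] {st : A →+* A}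

section Relations

/-- The generators `H_t`, bundled as a homomorphism by means of the relation
`H_{t₁} H_{t₂} = H_{t₁ t₂}`. -/
def H : Aˣ →* BruhatGroup st :=
  MonoidHom.mk' (fun t ↦ PresentedGroup.of (BGen.H t)) fun t₁ t₂ ↦
    (PresentedGroup.mk_eq_mk_of_mul_inv_mem (.inl ⟨t₁, t₂, rfl⟩)).symm

/-- The generators `U_s`, indexed by the bundled group of antisymmetric elements. -/
def U (s : antisymmSubgroup st) : BruhatGroup st := PresentedGroup.of (BGen.U s)

/-- The generator `W`. -/
def W : BruhatGroup st := PresentedGroup.of BGen.W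

lemma U_add (s₁ s₂ : antisymmSubgroup st) : U (s₁ + s₂) = U s₁ * U s₂ :=
  (PresentedGroup.mk_eq_mk_of_mul_inv_mem (.inr <| .inl ⟨s₁, s₂, s₁ + s₂, rfl, rfl⟩)).symm

lemma U_zero : U (0 : antisymmSubgroup st) = 1 :=
  mul_eq_left.mp ((U_add 0 0).symm.trans (by rw [add_zero]))

lemma U_neg (s : antisymmSubgroup st) : U (-s) = (U s)⁻¹ :=
  eq_inv_of_mul_eq_one_left (by rw [← U_add, neg_add_cancel, U_zero])

lemma H_mul_U (hst : Function.Involutive st) (t : Aˣ) (s : antisymmSubgroup st) :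
    H t * U s = U (twist hst t s) * H t :=
  PresentedGroup.mk_eq_mk_of_mul_inv_mem (.inr <| .inr <| .inl ⟨t, s, twist hst t s, rfl, rfl⟩)

lemma U_mul_H (hst : Function.Involutive st) (t : Aˣ) (s : antisymmSubgroup st) :
    U s * H t = H t * U (twist hst t⁻¹ s) := by
  have h : (H t)⁻¹ * U s = U (twist hst t⁻¹ s) * (H t)⁻¹ := by rw [← map_inv, H_mul_U hst]
  rw [← inv_mul_eq_iff_eq_mul, ← mul_assoc, h, inv_mul_cancel_right]

lemma W_mul_W : (W * W : BruhatGroup st) = 1 :=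
  PresentedGroup.one_of_mem (.inr <| .inr <| .inr <| .inl rfl)

lemma W_mul_W_mul (g : BruhatGroup st) : W * (W * g) = g := by
  rw [← mul_assoc, W_mul_W, one_mul]

lemma W_inv : (W⁻¹ : BruhatGroup st) = W :=
  inv_eq_of_mul_eq_one_left W_mul_W

lemma H_mul_W (t : Aˣ) : (H t * W : BruhatGroup st) = W * H (starInv st t) :=
  PresentedGroup.mk_eq_mk_of_mul_inv_mem (.inr <| .inr <| .inr <| .inr <| .inl ⟨t, rfl⟩)

lemma W_mul_H (hst : Function.Involutive st) (t : Aˣ) :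
    (W * H t : BruhatGroup st) = H (starInv st t) * W := by
  rw [H_mul_W, starInv_involutive hst]

lemma W_U_braid {t : Aˣ} {s s' : antisymmSubgroup st} (hs : (s : A) = t)
    (hs' : (s' : A) = (t⁻¹ : Aˣ)) : W * U s' * W * U (-s) * W * U s' = H (-t) :=
  PresentedGroup.mk_eq_mk_of_mul_inv_mem <| .inr <| .inr <| .inr <| .inr <| .inr
    ⟨t, s', -s, hs ▸ s.2, hs', congrArg Neg.neg hs, rfl⟩

lemma exists_W_mul_U_mul_W_eq (hst : Function.Involutive st) {s : antisymmSubgroup st}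
    (hs : IsUnit (s : A)) : ∃ (v : Aˣ) (s' : antisymmSubgroup st), (s : A) = v ∧
      (s' : A) = (v⁻¹ : Aˣ) ∧ W * U s * W = U s' * H (-v⁻¹) * W * U s' := by
  obtain ⟨v, hv⟩ := hs
  obtain ⟨s', hs'⟩ : ∃ s' : antisymmSubgroup st, (s' : A) = (v⁻¹ : Aˣ) :=
    ⟨⟨_, inv_mem_antisymmSubgroup (hv ▸ s.2)⟩, rfl⟩
  have hbraid : W * U s * W * (U s')⁻¹ * W * U s = H (-v⁻¹) := by
    rw [← U_neg]
    exact W_U_braid hs' (by rw [inv_inv, hv])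
  have htwist : twist hst (-v⁻¹) (-s) = s' := Subtype.ext <| by
    have hstar : st (v⁻¹ : Aˣ) = -(v⁻¹ : Aˣ) := hs' ▸ s'.2
    simp [twist, ← hv, hs', hstar]
  refine ⟨v, s', hv.symm, hs', ?_⟩
  calc W * U s * W
      = (W * U s * W * (U s')⁻¹ * W * U s) * (U s)⁻¹ * W⁻¹ * U s' := by group
    _ = H (-v⁻¹) * U (-s) * W * U s' := by rw [hbraid, U_neg, W_inv]
    _ = U s' * H (-v⁻¹) * W * U s' := by rw [H_mul_U hst, htwist]

lemma of_eq_H_or_U_or_W (x : BGen A st) : (∃ t, PresentedGroup.of x = (H t : BruhatGroup st)) ∨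
    (∃ s, PresentedGroup.of x = (U s : BruhatGroup st)) ∨
      PresentedGroup.of x = (W : BruhatGroup st) :=
  match x with
  | .H t => .inl ⟨t, rfl⟩
  | .U s => .inr (.inl ⟨s, rfl⟩)
  | .W => .inr (.inr rfl)

@[elab_as_elim]
lemma induction_left {p : BruhatGroup st → Prop} (one : p 1)
    (H_mul : ∀ t g, p g → p (H t * g)) (U_mul : ∀ s g, p g → p (U s * g))
    (W_mul : ∀ g, p g → p (W * g)) (g : BruhatGroup st) : p g := by
  have hg : g ∈ Subgroup.closure (Set.range PresentedGroup.of) :=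
    PresentedGroup.closure_range_of _ ▸ Subgroup.mem_top g
  induction hg using Subgroup.closure_induction_left with
  | one => exact one
  | mul_left _ hx g _ ih =>
    obtain ⟨x, rfl⟩ := hx
    obtain ⟨t, h⟩ | ⟨s, h⟩ | h := of_eq_H_or_U_or_W x <;> rw [h]
    exacts [H_mul t g ih, U_mul s g ih, W_mul g ih]
  | inv_mul_cancel _ hx g _ ih =>
    obtain ⟨x, rfl⟩ := hx
    obtain ⟨t, h⟩ | ⟨s, h⟩ | h := of_eq_H_or_U_or_W x <;> rw [h]
    exacts [map_inv H t ▸ H_mul t⁻¹ g ih, U_neg s ▸ U_mul (-s) g ih, W_inv (st := st) ▸ W_mul g ih]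

end Relations

section BigCell

/-- The big cell `B W B` of the Bruhat decomposition, where `B` is generated by the `H_t` and
`U_s`, given by the normal form of its elements. -/
def bigCell (st : A →+* A) : Set (BruhatGroup st) :=
  {g | ∃ x t y, g = U x * H t * W * U y}

lemma W_mem_bigCell : W ∈ bigCell st :=
  ⟨0, 1, 0, by simp [U_zero]⟩

lemma U_mul_mem_bigCell (s : antisymmSubgroup st) {g : BruhatGroup st} (hg : g ∈ bigCell st) :
    U s * g ∈ bigCell st := by
  obtain ⟨x, t, y, rfl⟩ := hg
  exact ⟨s + x, t, y, by simp only [U_add, mul_assoc]⟩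

lemma mul_U_mem_bigCell (s : antisymmSubgroup st) {g : BruhatGroup st} (hg : g ∈ bigCell st) :
    g * U s ∈ bigCell st := by
  obtain ⟨x, t, y, rfl⟩ := hg
  exact ⟨x, t, y + s, by simp only [U_add, mul_assoc]⟩

lemma H_mul_mem_bigCell (hst : Function.Involutive st) (r : Aˣ) {g : BruhatGroup st}
    (hg : g ∈ bigCell st) : H r * g ∈ bigCell st := by
  obtain ⟨x, t, y, rfl⟩ := hg
  exact ⟨twist hst r x, r * t, y, by simp only [map_mul, ← mul_assoc, H_mul_U hst]⟩

lemma mul_H_mem_bigCell (hst : Function.Involutive st) (r : Aˣ) {g : BruhatGroup st}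
    (hg : g ∈ bigCell st) : g * H r ∈ bigCell st := by
  obtain ⟨x, t, y, rfl⟩ := hg
  refine ⟨x, t * starInv st r, twist hst r⁻¹ y, ?_⟩
  calc U x * H t * W * U y * H r
      = U x * H t * (W * H r) * U (twist hst r⁻¹ y) := by
        rw [mul_assoc _ (U y), U_mul_H hst r y]; simp only [mul_assoc]
    _ = U x * H (t * starInv st r) * W * U (twist hst r⁻¹ y) := by
        rw [W_mul_H hst, map_mul]; simp only [mul_assoc]

lemma W_mul_U_mul_W_mul_H_mul_U_mem_bigCell (hst : Function.Involutive st)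
    {x : antisymmSubgroup st} (hx : IsUnit (x : A)) (t : Aˣ) (y : antisymmSubgroup st) :
    W * U x * W * H t * U y ∈ bigCell st := by
  obtain ⟨_, _, -, -, h⟩ := exists_W_mul_U_mul_W_eq hst hx
  exact mul_U_mem_bigCell y (mul_H_mem_bigCell hst t ⟨_, _, _, h⟩)

lemma exists_eq_W_mul_U_mul_W_mul_H_mul_U {g : BruhatGroup st} (hg : W * g ∈ bigCell st) :
    ∃ x t y, g = W * U x * W * H t * U y := by
  obtain ⟨x, t, y, h⟩ := hg
  refine ⟨x, starInv st t, y, ?_⟩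
  calc g = W * (U x * (H t * W) * U y) := by rw [← W_mul_W_mul g, h]; simp only [mul_assoc]
    _ = W * U x * W * H (starInv st t) * U y := by rw [H_mul_W]; simp only [mul_assoc]

lemma H_mul_mem_bigCell_or (hst : Function.Involutive st) (t : Aˣ) {g : BruhatGroup st}
    (hg : g ∈ bigCell st ∨ W * g ∈ bigCell st) :
    H t * g ∈ bigCell st ∨ W * (H t * g) ∈ bigCell st := by
  rw [← mul_assoc, W_mul_H hst, mul_assoc]
  exact hg.imp (H_mul_mem_bigCell hst t) (H_mul_mem_bigCell hst _)

lemma W_mul_mem_bigCell_or {g : BruhatGroup st} (hg : g ∈ bigCell st ∨ W * g ∈ bigCell st) :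
    W * g ∈ bigCell st ∨ W * (W * g) ∈ bigCell st := by
  rwa [W_mul_W_mul, or_comm]

variable [IsLocalRing A]

lemma U_mul_mem_bigCell_or_of_isUnit (hst : Function.Involutive st) {s : antisymmSubgroup st}
    (hs : IsUnit (s : A)) {g : BruhatGroup st} (hg : g ∈ bigCell st ∨ W * g ∈ bigCell st) :
    U s * g ∈ bigCell st ∨ W * (U s * g) ∈ bigCell st := by
  rcases hg with hg | hg
  · exact .inl (U_mul_mem_bigCell s hg)
  obtain ⟨x, t, y, rfl⟩ := exists_eq_W_mul_U_mul_W_mul_H_mul_U hg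
  by_cases hx : IsUnit (x : A)
  · exact .inl (U_mul_mem_bigCell s (W_mul_U_mul_W_mul_H_mul_U_mem_bigCell hst hx t y))
  obtain ⟨v, s', -, hs', h⟩ := exists_W_mul_U_mul_W_eq hst hs
  have hs'x : IsUnit ((s' + x : antisymmSubgroup st) : A) := by
    have hsum : IsUnit (((s' + x : antisymmSubgroup st) : A) + -x) := by simp [hs']
    exact (IsLocalRing.isUnit_or_isUnit_of_isUnit_add hsum).resolve_right (by simpa using hx)
  have heq : W * (U s * (W * U x * W * H t * U y)) =
      U s' * (H (-v⁻¹) * (W * U (s' + x) * W * H t * U y)) := by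
    simp only [U_add, ← mul_assoc, h]
  rw [heq]
  exact .inr (U_mul_mem_bigCell _ (H_mul_mem_bigCell hst _
    (W_mul_U_mul_W_mul_H_mul_U_mem_bigCell hst hs'x t y)))

lemma U_mul_mem_bigCell_or (hst : Function.Involutive st) {e : Aˣ} (he : st e = -e)
    (s : antisymmSubgroup st) {g : BruhatGroup st} (hg : g ∈ bigCell st ∨ W * g ∈ bigCell st) :
    U s * g ∈ bigCell st ∨ W * (U s * g) ∈ bigCell st := by
  by_cases hs : IsUnit (s : A)
  · exact U_mul_mem_bigCell_or_of_isUnit hst hs hg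
  let e' : antisymmSubgroup st := ⟨e, he⟩
  have hse : IsUnit ((s - e' : antisymmSubgroup st) : A) := by
    have hsum : IsUnit (((s - e' : antisymmSubgroup st) : A) + -s) := by simp [e', ← sub_eq_add_neg]
    exact (IsLocalRing.isUnit_or_isUnit_of_isUnit_add hsum).resolve_right (by simpa using hs)
  rw [← sub_add_cancel s e', U_add, mul_assoc]
  exact U_mul_mem_bigCell_or_of_isUnit hst hse (U_mul_mem_bigCell_or_of_isUnit hst e.isUnit hg)

theorem mem_bigCell_or_W_mul_mem_bigCell (hst : Function.Involutive st) {e : Aˣ}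
    (he : st e = -e) (g : BruhatGroup st) : g ∈ bigCell st ∨ W * g ∈ bigCell st := by
  induction g using induction_left with
  | one => exact .inr (by simpa using W_mem_bigCell)
  | H_mul t g ih => exact H_mul_mem_bigCell_or hst t ih
  | U_mul s g ih => exact U_mul_mem_bigCell_or hst he s ih
  | W_mul g ih => exact W_mul_mem_bigCell_or ih

end BigCell

section ToMatrix

/-- The generators of the presentation as invertible matrices. -/
def genUnit : BGen A st → (Matrix (Fin 2) (Fin 2) A)ˣ
  | .H t =>
    ⟨hMat A st t, hMat A st t⁻¹, by rw [hMat_mul_hMat, mul_inv_cancel, hMat_one],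
      by rw [hMat_mul_hMat, inv_mul_cancel, hMat_one]⟩
  | .U s =>
    ⟨uMat A s, uMat A (-s), by rw [uMat_mul_uMat, add_neg_cancel, uMat_zero],
      by rw [uMat_mul_uMat, neg_add_cancel, uMat_zero]⟩
  | .W => ⟨wMat A, wMat A, wMat_mul_wMat, wMat_mul_wMat⟩

lemma lift_genUnit_eq_one (hst : Function.Involutive st) :
    ∀ r ∈ bruhatRels A st, FreeGroup.lift genUnit r = 1 := by
  rintro r (⟨t₁, t₂, rfl⟩ | ⟨s₁, s₂, s₃, h, rfl⟩ | ⟨t, s, s', h, rfl⟩ | rfl | ⟨t, rfl⟩ |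
    ⟨t, s₁, s₂, ht, h₁, h₂, rfl⟩) <;>
  simp only [map_mul, map_inv, FreeGroup.lift_apply_of, mul_inv_eq_one] <;>
  refine Units.ext ?_ <;>
  simp only [Units.val_mul, Units.val_one, genUnit]
  · exact hMat_mul_hMat t₁ t₂
  · rw [uMat_mul_uMat, h]
  · rw [hMat_mul_uMat, h]
  · exact wMat_mul_wMat
  · exact hMat_mul_wMat hst t
  · rw [h₁, h₂, wMat_uMat_braid ht]

/-- The homomorphism `H_t ↦ h_t`, `U_s ↦ u_s`, `W ↦ w`. -/
def toMatrix (hst : Function.Involutive st) : BruhatGroup st →* Matrix (Fin 2) (Fin 2) A :=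
  (Units.coeHom _).comp (PresentedGroup.toGroup (lift_genUnit_eq_one hst))

variable (hst : Function.Involutive st)

lemma toMatrix_H (t : Aˣ) : toMatrix hst (H t) = hMat A st t :=
  congrArg Units.val (PresentedGroup.toGroup.of (lift_genUnit_eq_one hst))

lemma toMatrix_U (s : antisymmSubgroup st) : toMatrix hst (U s) = uMat A s :=
  congrArg Units.val (PresentedGroup.toGroup.of (lift_genUnit_eq_one hst))

lemma toMatrix_W : toMatrix hst W = wMat A :=
  congrArg Units.val (PresentedGroup.toGroup.of (lift_genUnit_eq_one hst))

lemma toMatrix_U_mul_H_mul_W_mul_U (x y : antisymmSubgroup st) (t : Aˣ) :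
    toMatrix hst (U x * H t * W * U y) = uMat A x * hMat A st t * wMat A * uMat A y := by
  simp only [map_mul, toMatrix_H, toMatrix_U, toMatrix_W]

lemma toMatrix_mem_SLstarSubmonoid (g : BruhatGroup st) :
    toMatrix hst g ∈ SLstarSubmonoid st := by
  induction g using induction_left with
  | one => rw [map_one]; exact one_mem _
  | H_mul t g ih =>
    rw [map_mul, toMatrix_H]
    exact mul_mem (hMat_mem_SLstarSubmonoid hst t) ih
  | U_mul s g ih =>
    rw [map_mul, toMatrix_U]
    exact mul_mem (uMat_mem_SLstarSubmonoid s) ih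
  | W_mul g ih =>
    rw [map_mul, toMatrix_W]
    exact mul_mem wMat_mem_SLstarSubmonoid ih

lemma toMatrix_ne_one_of_mem_bigCell [Nontrivial A] {g : BruhatGroup st} (hg : g ∈ bigCell st) :
    toMatrix hst g ≠ 1 := by
  obtain ⟨x, t, y, rfl⟩ := hg
  intro h
  rw [toMatrix_U_mul_H_mul_W_mul_U, uMat_mul_hMat_mul_wMat_mul_uMat] at h
  exact (starInv st t).ne_zero (by simpa using congrFun₂ h 1 0)

lemma toMatrix_injOn_bigCell : Set.InjOn (toMatrix hst) (bigCell st) := by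
  rintro _ ⟨x, t, y, rfl⟩ _ ⟨x', t', y', rfl⟩ h
  rw [toMatrix_U_mul_H_mul_W_mul_U, toMatrix_U_mul_H_mul_W_mul_U] at h
  obtain ⟨hx, rfl, hy⟩ := uMat_mul_hMat_mul_wMat_mul_uMat_inj hst h
  rw [Subtype.ext hx, Subtype.ext hy]

lemma exists_toMatrix_eq_of_isUnit {g : Matrix (Fin 2) (Fin 2) A} (hg : g ∈ SLstarSubmonoid st)
    (h : IsUnit (g 1 0)) : ∃ g', toMatrix hst g' = g := by
  obtain ⟨v, hv⟩ := h
  rw [eta_fin_two g, ← hv] at hg ⊢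
  obtain ⟨x, t, y, h⟩ := exists_eq_of_mem_SLstarSubmonoid hst hg
  exact ⟨U x * H t * W * U y, by rw [toMatrix_U_mul_H_mul_W_mul_U, h]⟩

variable [IsLocalRing A]

theorem toMatrix_injective {e : Aˣ} (he : st e = -e) : Function.Injective (toMatrix hst) := by
  refine (injective_iff_map_eq_one _).mpr fun g hg ↦ ?_
  obtain h | h := mem_bigCell_or_W_mul_mem_bigCell hst he g
  · exact absurd hg (toMatrix_ne_one_of_mem_bigCell hst h)
  · have hW : toMatrix hst (W * g) = toMatrix hst W := by rw [map_mul, hg, mul_one]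
    exact mul_eq_left.mp (toMatrix_injOn_bigCell hst h W_mem_bigCell hW)

theorem range_toMatrix : Set.range (toMatrix hst) = SLstarSubmonoid st := by
  refine Set.Subset.antisymm (Set.range_subset_iff.mpr (toMatrix_mem_SLstarSubmonoid hst))
    fun g hg ↦ ?_
  obtain h | h := isUnit_or_isUnit_of_mem_SLstarSubmonoid hst (eta_fin_two g ▸ hg)
  · exact exists_toMatrix_eq_of_isUnit hst hg h
  · obtain ⟨g', hg'⟩ := exists_toMatrix_eq_of_isUnit hst (mul_mem wMat_mem_SLstarSubmonoid hg)
      (by simpa [wMat, mul_apply, Fin.sum_univ_two] using h)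
    refine ⟨W * g', ?_⟩
    rw [map_mul, hg', toMatrix_W, ← Matrix.mul_assoc, wMat_mul_wMat, Matrix.one_mul]

end ToMatrix

end BruhatGroup

theorem SLstar_bruhat_presentation_general {A : Type} [CommRing A] [IsLocalRing A] {st : A →+* A}
    (hst : Function.Involutive st) (he : ∃ e : Aˣ, st e = -e) :
    ∃ φ : PresentedGroup (bruhatRels A st) →* Matrix (Fin 2) (Fin 2) A,
      Function.Injective φ ∧
      Set.range ⇑φ = SLstarSet A st ∧
      (∀ u : Aˣ, φ (PresentedGroup.of (BGen.H u)) = hMat A st u) ∧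
      (∀ s : {s : A // st s = -s}, φ (PresentedGroup.of (BGen.U s)) = uMat A ↑s) ∧
      φ (PresentedGroup.of BGen.W) = wMat A :=
  let ⟨_, he⟩ := he
  ⟨BruhatGroup.toMatrix hst, BruhatGroup.toMatrix_injective hst he, BruhatGroup.range_toMatrix hst,
    BruhatGroup.toMatrix_H hst, BruhatGroup.toMatrix_U hst, BruhatGroup.toMatrix_W hst⟩

/-- `SL_*^1(2,A_n)` is isomorphic to the group presented by the
Bruhat generators and relations, via `H t ↦ h_t`, `U s ↦ u_s`, `W ↦ w`. -/
theorem SLstar_bruhat_presentation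
    (p t q : ℕ) (hp : p.Prime) (hp2 : Odd p) (ht : 0 < t) (hq : q = p ^ t)
    (k K : Type) [Field k] [Fintype k] [Field K] [Fintype K] [Algebra k K]
    (hcardk : Fintype.card k = q) (hcardK : Fintype.card K = q ^ 2)
    (Δ : K) (hΔ : Δ ∉ Set.range (algebraMap k K))
    (hΔ2 : Δ ^ 2 ∈ Set.range (algebraMap k K))
    (σ : K →+* K) (hσk : ∀ c : k, σ (algebraMap k K c) = algebraMap k K c)
    (hσne : σ ≠ RingHom.id K) (hσΔ : σ Δ = -Δ)
    (n : ℕ) (hn : 0 < n) :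
    ∃ φ : PresentedGroup (bruhatRels (TruncPoly K n) (trStar K σ n)) →*
        Matrix (Fin 2) (Fin 2) (TruncPoly K n),
      Function.Injective φ ∧
      Set.range ⇑φ = SLstarSet (TruncPoly K n) (trStar K σ n) ∧
      (∀ u : (TruncPoly K n)ˣ,
        φ (PresentedGroup.of (BGen.H u)) = hMat (TruncPoly K n) (trStar K σ n) u) ∧
      (∀ s : {s : TruncPoly K n // trStar K σ n s = -s},
        φ (PresentedGroup.of (BGen.U s)) = uMat (TruncPoly K n) ↑s) ∧
      φ (PresentedGroup.of BGen.W) = wMat (TruncPoly K n) := by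
  have hσ := ringHom_involutive_of_card_eq_sq (hcardK.trans (by rw [hcardk])) hσk
  have hΔ₀ : Δ ≠ 0 := fun h ↦ hΔ ⟨0, by rw [h, map_zero]⟩
  have := isLocalRing_truncPoly K hn.ne'
  exact SLstar_bruhat_presentation_general (trStar_involutive hσ n)
    (exists_unit_trStar_eq_neg hΔ₀.isUnit hσΔ n)
end
end
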